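/- arXiv:1404.1182 — 2 statements merged into one kernel-verified Lean document; each statement's English description precedes it below -/
import Mathlib

section
/- There exists n₀ such that for every n ≥ n₀ the following holds: let H be a simple graph on n vertices with no isolated vertices and maximum degree Δ(H) ≤ √n/200, and write δ = δ(H). Then every simple graph F on n vertices with exactly C(n−1,2) + δ − 1 edges that contains no subgraph isomorphic to H contains a complete subgraph (clique) on more than n − 12δ vertices. -/
/-- `G` contains a copy of `H`, i.e. a subgraph isomorphic to `H`: there is an
injection of the vertices of `H` into the vertices of `G` mapping edges to edges. -/
def ContainsCopy {α β : Type*} (G : SimpleGraph α) (H : SimpleGraph β) : Prop :=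
  ∃ f : β → α, Function.Injective f ∧ ∀ u v : β, H.Adj u v → G.Adj (f u) (f v)

open Finset

theorem card_filter_adj_perm_le {V : Type*} [Fintype V] (H : SimpleGraph V) [DecidableRel H.Adj] (σ : Equiv.Perm V) (x : V) :
    #{w | H.Adj x (σ w)} ≤ H.degree x := by
  rw [← H.card_neighborFinset_eq_degree]
  refine card_le_card_of_injOn σ ?_ σ.injective.injOn
  intro w hw
  simpa using hw

/-- A bijection without conflicts on `S` can be corrected outside `S` by successive swaps. -/
theorem exists_packing_of_partial {V : Type*} [Fintype V] [DecidableEq V]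
    (G H : SimpleGraph V) [DecidableRel G.Adj] [DecidableRel H.Adj]
    (S : Finset V) (σ₀ : Equiv.Perm V) (t D w : ℕ)
    (hS : ∀ u ∈ S, ∀ v ∈ S, G.Adj u v → ¬ H.Adj (σ₀ u) (σ₀ v))
    (ht : ∀ u ∉ S, G.degree u ≤ t) (hD : ∀ x, H.degree x ≤ D)
    (hw : ∀ σ : Equiv.Perm V, (∀ s ∈ S, σ s = σ₀ s) → ∀ u ∉ S,
      ∑ v with H.Adj (σ u) (σ v), G.degree v ≤ w)
    (hcard : #S + t + t * D + w < Fintype.card V) :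
    ∃ σ : Equiv.Perm V, ∀ u v, G.Adj u v → ¬ H.Adj (σ u) (σ v) := by
  classical
  let conflicts (σ : Equiv.Perm V) : Finset (V × V) :=
    {p | G.Adj p.1 p.2 ∧ H.Adj (σ p.1) (σ p.2)}
  obtain ⟨σ, hσ, hmin⟩ := exists_min_image
    ({σ | ∀ s ∈ S, σ s = σ₀ s} : Finset (Equiv.Perm V)) (fun σ => #(conflicts σ))
    ⟨σ₀, by simp⟩
  replace hσ : ∀ s ∈ S, σ s = σ₀ s := by simpa using hσ
  refine ⟨σ, ?_⟩
  suffices key : ∀ u ∉ S, ∀ v, G.Adj u v → ¬ H.Adj (σ u) (σ v) by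
    intro u v huv
    by_cases hu : u ∈ S
    · by_cases hv : v ∈ S
      · rw [hσ u hu, hσ v hv]
        exact hS u hu v hv huv
      · exact fun h => key v hv u huv.symm h.symm
    · exact key u hu v huv
  intro u hu v huv hconf
  set X₁ : Finset V := (G.neighborFinset u).biUnion fun z => {x | H.Adj (σ z) (σ x)} with hX₁
  set X₂ : Finset V := ({z | H.Adj (σ u) (σ z)} : Finset V).biUnion fun z => G.neighborFinset z
    with hX₂
  have hX₁card : #X₁ ≤ t * D := by
    calc #X₁ ≤ #(G.neighborFinset u) * D :=
          card_biUnion_le_card_mul _ _ _ fun z _ => (card_filter_adj_perm_le H σ _).trans (hD _)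
      _ ≤ t * D := Nat.mul_le_mul_right _ (by simpa using ht u hu)
  have hX₂card : #X₂ ≤ w := by
    refine card_biUnion_le.trans ?_
    simpa using hw σ hσ u hu
  obtain ⟨x, hx⟩ : ∃ x, x ∉ S ∪ G.neighborFinset u ∪ X₁ ∪ X₂ := by
    by_contra! hall
    have h1 := card_le_card (fun x _ => hall x : univ ⊆ S ∪ G.neighborFinset u ∪ X₁ ∪ X₂)
    have h2 := card_union_le (S ∪ G.neighborFinset u ∪ X₁) X₂
    have h3 := card_union_le (S ∪ G.neighborFinset u) X₁
    have h4 := card_union_le S (G.neighborFinset u)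
    have h5 := ht u hu
    rw [G.card_neighborFinset_eq_degree] at h4
    rw [card_univ] at h1
    omega
  simp only [mem_union, not_or, hX₁, hX₂, mem_biUnion, mem_filter, mem_univ, true_and,
    SimpleGraph.mem_neighborFinset, not_exists, not_and] at hx
  obtain ⟨⟨⟨hxS, hux⟩, hx₁⟩, hx₂⟩ := hx
  have hxu : x ≠ u := by
    rintro rfl
    exact hx₂ v hconf huv.symm
  set τ : Equiv.Perm V := (Equiv.swap u x).trans σ with hτ
  have hτu : τ u = σ x := by simp [hτ]
  have hτx : τ x = σ u := by simp [hτ]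
  have hτo : ∀ z, z ≠ u → z ≠ x → τ z = σ z := fun z h1 h2 => by
    simp [hτ, Equiv.swap_apply_of_ne_of_ne h1 h2]
  have hτS : ∀ s ∈ S, τ s = σ₀ s := fun s hs => by
    rw [hτo s (by rintro rfl; exact hu hs) (by rintro rfl; exact hxS hs), hσ s hs]
  have hfreeu : ∀ z, G.Adj u z → ¬ H.Adj (τ u) (τ z) := by
    intro z huz h
    have hzx : z ≠ x := by rintro rfl; exact hux huz
    rw [hτu, hτo z huz.ne' hzx] at h
    exact hx₁ z huz h.symm
  have hfreex : ∀ z, G.Adj x z → ¬ H.Adj (τ x) (τ z) := by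
    intro z hxz h
    have hzu : z ≠ u := by rintro rfl; exact hux hxz.symm
    rw [hτx, hτo z hzu hxz.ne'] at h
    exact hx₂ z h hxz.symm
  have hlt : #(conflicts τ) < #(conflicts σ) := by
    refine card_lt_card ((ssubset_iff_of_subset ?_).2 ⟨(u, v), ?_, ?_⟩)
    · rintro ⟨p, q⟩ hpq
      simp only [conflicts, mem_filter, mem_univ, true_and] at hpq ⊢
      obtain ⟨hG, hH⟩ := hpq
      have hpu : p ≠ u := by rintro rfl; exact hfreeu q hG hH
      have hpx : p ≠ x := by rintro rfl; exact hfreex q hG hH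
      have hqu : q ≠ u := by rintro rfl; exact hfreeu p hG.symm hH.symm
      have hqx : q ≠ x := by rintro rfl; exact hfreex p hG.symm hH.symm
      rw [hτo p hpu hpx, hτo q hqu hqx] at hH
      exact ⟨hG, hH⟩
    · simp [conflicts, huv, hconf]
    · simp only [conflicts, mem_filter, mem_univ, true_and]
      exact fun h => hfreeu v h.1 h.2
  exact absurd (hmin τ (by simpa using hτS)) (not_le.2 hlt)

/-- Weighted vertices can be placed greedily on an independent set of `H` so that no vertex of `H`
sees a large total weight. -/
theorem exists_balanced_placement {V : Type*} [Fintype V] [DecidableEq V]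
    (H : SimpleGraph V) [DecidableRel H.Adj] (d : V → ℕ) (D : ℕ)
    (hD : ∀ x, H.degree x ≤ D) (X A : Finset V)
    (hd : ∀ a ∈ A, 2 * d a ≤ Fintype.card V) (hsum : ∑ a ∈ A, d a ≤ 2 * Fintype.card V)
    (hcard : #X + #A * (D + 1) + 8 * D * D < Fintype.card V) :
    ∃ g : V → V, Set.InjOn g A ∧ (∀ a ∈ A, g a ∉ X) ∧
      (∀ a ∈ A, ∀ a' ∈ A, ¬ H.Adj (g a) (g a')) ∧
      ∀ y, 4 * ∑ a ∈ A with H.Adj y (g a), d a ≤ 3 * Fintype.card V := by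
  classical
  induction A using Finset.induction_on with
  | empty => exact ⟨id, by simp⟩
  | insert a A ha ih =>
    rw [sum_insert ha] at hsum
    rw [card_insert_of_notMem ha] at hcard
    obtain ⟨g, hinj, hgX, hind, hW⟩ := ih (fun b hb => hd b (mem_insert_of_mem hb))
      (by omega) (lt_of_le_of_lt (by gcongr; omega) hcard)
    set n := Fintype.card V
    set W : V → ℕ := fun y => ∑ b ∈ A with H.Adj y (g b), d b with hWdef
    set heavy : Finset V := {y | n < 4 * W y} with hheavy
    have hWsum : ∑ y, W y ≤ 2 * n * D := by
      calc ∑ y, W y = ∑ b ∈ A, ∑ y, if H.Adj y (g b) then d b else 0 := by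
            simp only [hWdef, sum_filter]
            exact sum_comm
        _ ≤ ∑ b ∈ A, d b * D := by
            refine sum_le_sum fun b _ => ?_
            rw [← sum_filter, sum_const, smul_eq_mul, mul_comm]
            refine Nat.mul_le_mul_left _ (le_trans ?_ (hD (g b)))
            simpa [H.adj_comm] using card_filter_adj_perm_le H (Equiv.refl V) (g b)
        _ ≤ 2 * n * D := by
            rw [← sum_mul]
            exact Nat.mul_le_mul_right _ (by omega)
    have hheavycard : #heavy ≤ 8 * D := by
      have h1 : #heavy * n ≤ ∑ y ∈ heavy, 4 * W y := by
        rw [← smul_eq_mul]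
        exact card_nsmul_le_sum _ _ _ fun y hy => (mem_filter.1 hy).2.le
      have h2 : ∑ y ∈ heavy, 4 * W y ≤ ∑ y, 4 * W y :=
        sum_le_sum_of_subset (subset_univ _)
      rw [← mul_sum univ] at h2
      have hn : 0 < n := by omega
      refine Nat.le_of_mul_le_mul_right ?_ hn
      nlinarith
    set N₁ : Finset V := A.biUnion fun b => H.neighborFinset (g b) with hN₁
    set N₂ : Finset V := heavy.biUnion fun y => H.neighborFinset y with hN₂
    have hN₁card : #N₁ ≤ #A * D :=
      card_biUnion_le_card_mul _ _ _ fun b _ => by simpa using hD (g b)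
    have hN₂card : #N₂ ≤ 8 * D * D :=
      (card_biUnion_le_card_mul _ _ D fun b _ => by simpa using hD b).trans
        (Nat.mul_le_mul_right _ hheavycard)
    obtain ⟨x, hx⟩ : ∃ x, x ∉ X ∪ A.image g ∪ N₁ ∪ N₂ := by
      by_contra! hall
      have h1 := card_le_card (fun x _ => hall x : univ ⊆ X ∪ A.image g ∪ N₁ ∪ N₂)
      have h2 := card_union_le (X ∪ A.image g ∪ N₁) N₂
      have h3 := card_union_le (X ∪ A.image g) N₁
      have h4 := card_union_le X (A.image g)
      have h5 : #(A.image g) ≤ #A := card_image_le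
      rw [card_univ] at h1
      have h6 : (#A + 1) * (D + 1) = #A * D + #A + D + 1 := by ring
      omega
    simp only [mem_union, not_or, hN₁, hN₂, mem_biUnion, SimpleGraph.mem_neighborFinset,
      not_exists, not_and, mem_image] at hx
    obtain ⟨⟨⟨hxX, hxA⟩, hx₁⟩, hx₂⟩ := hx
    have hne : ∀ b ∈ A, b ≠ a := fun b hb h => ha (h ▸ hb)
    have hupd : ∀ b ∈ A, Function.update g a x b = g b := fun b hb =>
      Function.update_of_ne (hne b hb) _ _
    refine ⟨Function.update g a x, ?_, ?_, ?_, ?_⟩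
    · rw [coe_insert, Set.injOn_insert (by simpa using ha)]
      refine ⟨fun b hb c hc h => hinj hb hc ?_, ?_⟩
      · rwa [hupd b hb, hupd c hc] at h
      · rintro ⟨b, hb, h⟩
        rw [hupd b hb, Function.update_self] at h
        exact hxA b hb h
    · intro b hb
      rcases mem_insert.1 hb with rfl | hb
      · simpa using hxX
      · rw [hupd b hb]
        exact hgX b hb
    · intro b hb c hc
      rcases mem_insert.1 hb with rfl | hbA <;> rcases mem_insert.1 hc with rfl | hcA
      · simp
      · rw [hupd c hcA, Function.update_self]
        exact fun h => hx₁ c hcA h.symm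
      · rw [hupd b hbA, Function.update_self]
        exact hx₁ b hbA
      · rw [hupd b hbA, hupd c hcA]
        exact hind b hbA c hcA
    · intro y
      have hsame : ∑ b ∈ A with H.Adj y (Function.update g a x b), d b = W y := by
        refine sum_congr (filter_congr fun b hb => ?_) fun _ _ => rfl
        rw [hupd b hb]
      rw [filter_insert, Function.update_self]
      split_ifs with hyx
      · rw [sum_insert (by simp [ha]), hsame]
        have h1 : ¬ n < 4 * W y := fun h => hx₂ y (by simpa [hheavy] using h) hyx
        have h2 := hd a (mem_insert_self a A)
        omega
      · rw [hsame]
        exact hW y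

theorem exists_independent_subset {V : Type*} [Fintype V] [DecidableEq V]
    (G : SimpleGraph V) [DecidableRel G.Adj] (r : ℕ) (L : Finset V)
    (hL : ∀ v ∈ L, G.degree v ≤ r) (k : ℕ) (hk : k * (r + 1) ≤ #L) :
    ∃ I ⊆ L, #I = k ∧ ∀ u ∈ I, ∀ v ∈ I, ¬ G.Adj u v := by
  induction k with
  | zero => exact ⟨∅, by simp⟩
  | succ k ih =>
    obtain ⟨I, hIL, hIk, hI⟩ := ih (le_trans (by gcongr; omega) hk)
    have hlt : #(I.biUnion fun v => insert v (G.neighborFinset v)) < #L := by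
      refine lt_of_le_of_lt (card_biUnion_le_card_mul _ _ (r + 1) fun v hv => ?_) ?_
      · refine (card_insert_le _ _).trans ?_
        simpa using hL v (hIL hv)
      · rw [hIk]
        linarith
    obtain ⟨x, hxL, hx⟩ := exists_mem_notMem_of_card_lt_card hlt
    simp only [mem_biUnion, mem_insert, SimpleGraph.mem_neighborFinset, not_exists, not_and,
      not_or] at hx
    refine ⟨insert x I, insert_subset hxL hIL, ?_, ?_⟩
    · rw [card_insert_of_notMem fun h => (hx x h).1 rfl, hIk]
    · intro u hu v hv
      rcases mem_insert.1 hu with rfl | huI <;> rcases mem_insert.1 hv with rfl | hvI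
      · simp
      · exact fun h => (hx v hvI).2 h.symm
      · exact (hx u huI).2
      · exact hI u huI v hvI

theorem degree_add_degree_le_card_edgeFinset_add_one {V : Type*} [Fintype V] [DecidableEq V]
    (G : SimpleGraph V) [DecidableRel G.Adj] {a b : V} (hab : a ≠ b) :
    G.degree a + G.degree b ≤ #G.edgeFinset + 1 := by
  rw [← G.card_incidenceFinset_eq_degree, ← G.card_incidenceFinset_eq_degree,
    ← card_union_add_card_inter]
  refine add_le_add (card_le_card (union_subset (G.incidenceFinset_subset a)
    (G.incidenceFinset_subset b))) ?_
  refine card_le_one.2 fun e he f hf => ?_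
  simp only [mem_inter, SimpleGraph.mem_incidenceFinset] at he hf
  exact (G.incidenceSet_inter_incidenceSet_subset hab he).trans
    (G.incidenceSet_inter_incidenceSet_subset hab hf).symm

/-- Deleting `b` and one endpoint of every edge avoiding `b` leaves an independent set. -/
theorem exists_large_independent_set {V : Type*} [Fintype V] [DecidableEq V]
    (G : SimpleGraph V) [DecidableRel G.Adj] (b : V) :
    ∃ K : Finset V, Fintype.card V + G.degree b ≤ #K + 1 + #G.edgeFinset ∧
      ∀ u ∈ K, ∀ v ∈ K, ¬ G.Adj u v := by
  set E : Finset (Sym2 V) := G.edgeFinset \ G.incidenceFinset b with hE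
  set C : Finset V := insert b (E.image fun e => e.out.1) with hC
  have hCcard : #C ≤ #E + 1 := (card_insert_le _ _).trans (Nat.add_le_add_right card_image_le 1)
  have hEcard : #E + G.degree b = #G.edgeFinset := by
    rw [← G.card_incidenceFinset_eq_degree]
    exact card_sdiff_add_card_eq_card (G.incidenceFinset_subset b)
  refine ⟨Cᶜ, ?_, ?_⟩
  · have := card_add_card_compl C
    omega
  · intro u hu v hv huv
    simp only [hC, mem_compl, mem_insert, mem_image, not_or, not_exists, not_and] at hu hv
    have he : s(u, v) ∈ E := by
      simp only [hE, mem_sdiff, SimpleGraph.mem_edgeFinset, SimpleGraph.mem_edgeSet, huv,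
        SimpleGraph.mem_incidenceFinset, SimpleGraph.mk'_mem_incidenceSet_iff, true_and]
      rintro (h | h)
      exacts [hu.1 h.symm, hv.1 h.symm]
    rcases Sym2.mem_iff.1 (Sym2.out_fst_mem s(u, v)) with h | h
    exacts [hu.2 _ he h, hv.2 _ he h]

/-- If `G` has at most `n - 1` edges, then at least half of the non-neighbours of any vertex have
degree at most three. -/
theorem card_nonneighbors_le_two_mul_card_low_degree {V : Type*} [Fintype V] [DecidableEq V]
    (G : SimpleGraph V) [DecidableRel G.Adj] (b : V) (hG : #G.edgeFinset < Fintype.card V) :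
    Fintype.card V ≤
      2 * #{v | v ≠ b ∧ ¬ G.Adj b v ∧ G.degree v ≤ 3} + 1 + G.degree b := by
  set N : Finset V := {v | v ≠ b ∧ ¬ G.Adj b v} with hN
  set L : Finset V := {v | v ≠ b ∧ ¬ G.Adj b v ∧ G.degree v ≤ 3} with hL
  have hsplit : (univ : Finset V) = insert b (G.neighborFinset b ∪ N) := by
    ext v
    simp only [hN, mem_univ, mem_insert, mem_union, SimpleGraph.mem_neighborFinset, mem_filter,
      true_and, true_iff]
    tauto
  have hdisj : Disjoint (G.neighborFinset b) N := by
    rw [disjoint_left]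
    intro v hv hvN
    simp only [hN, mem_filter] at hvN
    exact hvN.2.2 (by simpa using hv)
  have hb : b ∉ G.neighborFinset b ∪ N := by simp [hN]
  have hcard : Fintype.card V = #N + G.degree b + 1 := by
    rw [← card_univ, hsplit, card_insert_of_notMem hb, card_union_of_disjoint hdisj,
      G.card_neighborFinset_eq_degree]
    omega
  have hsum : G.degree b + (∑ v ∈ G.neighborFinset b, G.degree v + ∑ v ∈ N, G.degree v)
      = 2 * #G.edgeFinset := by
    rw [← G.sum_degrees_eq_twice_card_edges, hsplit, sum_insert hb, sum_union hdisj]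
  have hnbr : G.degree b ≤ ∑ v ∈ G.neighborFinset b, G.degree v := by
    rw [← G.card_neighborFinset_eq_degree, card_eq_sum_ones]
    refine sum_le_sum fun v hv => ?_
    rw [Nat.one_le_iff_ne_zero, ← Nat.pos_iff_ne_zero, G.degree_pos_iff_exists_adj]
    exact ⟨b, by simpa [G.adj_comm] using hv⟩
  have hLN : L ⊆ N := fun v hv => by
    simp only [hL, hN, mem_filter] at hv ⊢
    tauto
  have hhigh : 4 * #(N \ L) ≤ ∑ v ∈ N, G.degree v := by
    calc 4 * #(N \ L) = #(N \ L) • 4 := by rw [smul_eq_mul, mul_comm]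
      _ ≤ ∑ v ∈ N \ L, G.degree v := by
          refine card_nsmul_le_sum _ _ _ fun v hv => ?_
          simp only [hL, hN, mem_sdiff, mem_filter, mem_univ, true_and] at hv
          by_contra! h
          exact hv.2 ⟨hv.1.1, hv.1.2, by omega⟩
      _ ≤ ∑ v ∈ N, G.degree v := sum_le_sum_of_subset sdiff_subset
  have := card_sdiff_add_card_eq_card hLN
  omega

/-- Let `G` have few edges and `H` small maximum degree `D`. If some vertex `b` of maximum degree in
`G` has at least `8 * δ` non-neighbours, then `G` and `H` pack. -/
theorem exists_packing {V : Type*} [Fintype V] [DecidableEq V]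
    (G H : SimpleGraph V) [DecidableRel G.Adj] [DecidableRel H.Adj] (s D : ℕ) (x₀ b : V)
    (hs : 1000 ≤ s) (hsn : s * s ≤ Fintype.card V) (hns : Fintype.card V ≤ s * s + 2 * s)
    (hDs : 200 * D ≤ s) (hD : ∀ x, H.degree x ≤ D) (hG : #G.edgeFinset < Fintype.card V)
    (hb : ∀ v, G.degree v ≤ G.degree b)
    (hm : 8 * H.degree x₀ + 1 + G.degree b ≤ Fintype.card V) :
    ∃ σ : Equiv.Perm V, ∀ u v, G.Adj u v → ¬ H.Adj (σ u) (σ v) := by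
  classical
  set n := Fintype.card V with hn
  -- an independent set of low-degree non-neighbours of `b`, to receive the neighbours of `x₀`
  obtain ⟨I, hIL, hIcard, hIind⟩ := exists_independent_subset G 3
    {v | v ≠ b ∧ ¬ G.Adj b v ∧ G.degree v ≤ 3} (fun v hv => by simp at hv; tauto) (H.degree x₀)
    (by have := card_nonneighbors_le_two_mul_card_low_degree G b hG; omega)
  have hI : ∀ v ∈ I, v ≠ b ∧ ¬ G.Adj b v ∧ G.degree v ≤ 3 := fun v hv => by simpa using hIL hv
  set A : Finset V := {v | v ≠ b ∧ s < G.degree v} with hA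
  have hAmem : ∀ a ∈ A, a ≠ b ∧ s < G.degree a := fun a ha => by simpa [hA] using ha
  have hsumA : ∑ a ∈ A, G.degree a ≤ 2 * n := by
    have h1 : ∑ a ∈ A, G.degree a ≤ ∑ a, G.degree a := sum_le_sum_of_subset (subset_univ _)
    rw [G.sum_degrees_eq_twice_card_edges] at h1
    omega
  have hAcard : #A ≤ 2 * s + 4 := by
    have h1 : #A * s ≤ ∑ a ∈ A, G.degree a := by
      rw [← smul_eq_mul]
      exact card_nsmul_le_sum _ _ _ fun a ha => (hAmem a ha).2.le
    by_contra! h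
    have h2 : (2 * s + 5) * s ≤ #A * s := Nat.mul_le_mul_right _ h
    nlinarith
  set X : Finset V := insert x₀ (H.neighborFinset x₀ ∪
    (H.neighborFinset x₀).biUnion fun y => H.neighborFinset y) with hX
  have hXcard : #X ≤ D + D * D + 1 := by
    refine (card_insert_le _ _).trans (Nat.add_le_add_right ((card_union_le _ _).trans ?_) 1)
    refine add_le_add (by simpa using hD x₀) ?_
    refine (card_biUnion_le_card_mul _ _ D fun y _ => by simpa using hD y).trans ?_
    exact Nat.mul_le_mul_right _ (by simpa using hD x₀)
  obtain ⟨g, hginj, hgX, hgind, hgW⟩ := exists_balanced_placement H (G.degree ·) D hD X A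
    (fun a ha => by
      have h1 := degree_add_degree_le_card_edgeFinset_add_one G (hAmem a ha).1
      have h2 := hb a
      omega) hsumA
    (by
      have h1 : #A * (D + 1) ≤ (2 * s + 4) * (D + 1) := Nat.mul_le_mul_right _ hAcard
      nlinarith)
  have hgX' : ∀ a ∈ A, g a ≠ x₀ ∧ ¬ H.Adj x₀ (g a) ∧ ∀ y, H.Adj x₀ y → ¬ H.Adj y (g a) := by
    intro a ha
    simpa [hX] using hgX a ha
  obtain ⟨e⟩ : Nonempty (I ≃ H.neighborFinset x₀) :=
    ⟨Finset.equivOfCardEq (by rw [hIcard, H.card_neighborFinset_eq_degree])⟩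
  set S : Finset V := insert b (I ∪ A) with hS
  set φ : V → V := fun v => if v = b then x₀ else if h : v ∈ I then e ⟨v, h⟩ else g v with hφ
  have hφb : φ b = x₀ := by simp [hφ]
  have hφI : ∀ v (h : v ∈ I), φ v = e ⟨v, h⟩ := fun v h => by simp [hφ, h, (hI v h).1]
  have hφI' : ∀ v ∈ I, H.Adj x₀ (φ v) := fun v h => by
    rw [hφI v h]
    exact (H.mem_neighborFinset x₀ _).1 (e ⟨v, h⟩).2
  have hφA : ∀ v ∈ A, φ v = g v := fun v h => by
    obtain ⟨hvb, hvs⟩ := hAmem v h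
    have hvI : v ∉ I := fun hv => by
      have := (hI v hv).2.2
      omega
    simp [hφ, hvb, hvI]
  have hφinj : Set.InjOn φ S := by
    intro u hu v hv huv
    simp only [hS, coe_insert, coe_union, Set.mem_insert_iff, Set.mem_union, mem_coe] at hu hv
    rcases hu with rfl | hu | hu <;> rcases hv with rfl | hv | hv
    · rfl
    · rw [hφb] at huv
      exact absurd huv (hφI' v hv).ne
    · rw [hφb, hφA v hv] at huv
      exact absurd huv.symm (hgX' v hv).1
    · rw [hφb] at huv
      exact absurd huv (hφI' u hu).ne'
    · rw [hφI u hu, hφI v hv] at huv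
      simpa using e.injective (Subtype.ext huv)
    · have h := hφI' u hu
      rw [huv, hφA v hv] at h
      exact absurd h (hgX' v hv).2.1
    · rw [hφb, hφA u hu] at huv
      exact absurd huv (hgX' u hu).1
    · have h := hφI' v hv
      rw [← huv, hφA u hu] at h
      exact absurd h (hgX' u hu).2.1
    · rw [hφA u hu, hφA v hv] at huv
      exact hginj hu hv huv
  obtain ⟨σ, hσ⟩ : ∃ σ : Equiv.Perm V, ∀ v ∈ S, σ v = φ v := by
    obtain ⟨f, hf⟩ := Finset.exists_equiv_extend_of_card_eq (t := (univ : Finset V)) rfl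
      (subset_univ (S.image φ)) hφinj
    exact ⟨f.trans (Equiv.subtypeUnivEquiv mem_univ), fun v hv => hf v hv⟩
  have hbS : b ∈ S := mem_insert_self _ _
  have hIS : ∀ v ∈ I, v ∈ S := fun v hv => mem_insert_of_mem (mem_union_left _ hv)
  have hAS : ∀ v ∈ A, v ∈ S := fun v hv => mem_insert_of_mem (mem_union_right _ hv)
  have hlow : ∀ v, v ≠ b → v ∉ A → G.degree v ≤ s := fun v hvb hvA => by
    by_contra! h
    exact hvA (by simp [hA, hvb, h])
  refine exists_packing_of_partial G H S σ s D (D * s + 3 * n / 4) ?_ ?_ hD ?_ ?_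
  · intro u hu v hv huv
    rw [hσ u hu, hσ v hv]
    simp only [hS, mem_insert, mem_union] at hu hv
    rcases hu with rfl | hu | hu <;> rcases hv with rfl | hv | hv
    · simp
    · exact absurd huv (hI v hv).2.1
    · rw [hφb, hφA v hv]
      exact (hgX' v hv).2.1
    · exact absurd huv.symm (hI u hu).2.1
    · exact absurd huv (hIind u hu v hv)
    · rw [hφA v hv]
      exact (hgX' v hv).2.2 _ (hφI' u hu)
    · rw [hφb, hφA u hu]
      exact fun h => (hgX' u hu).2.1 h.symm
    · rw [hφA u hu]
      exact fun h => (hgX' u hu).2.2 _ (hφI' v hv) h.symm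
    · rw [hφA u hu, hφA v hv]
      exact hgind u hu v hv
  · intro u hu
    exact hlow u (by rintro rfl; exact hu hbS) fun h => hu (hAS u h)
  · intro τ hτ u hu
    have hub : ¬ H.Adj (τ u) (τ b) := by
      rw [hτ b hbS, hσ b hbS, hφb]
      intro h
      obtain ⟨⟨v, hv⟩, hev⟩ := e.surjective ⟨τ u, by simpa using h.symm⟩
      have h1 : τ v = τ u := by rw [hτ v (hIS v hv), hσ v (hIS v hv), hφI v hv, hev]
      exact hu (τ.injective h1 ▸ hIS v hv)
    have hmid : ∑ v ∈ A with H.Adj (τ u) (τ v), G.degree v ≤ 3 * n / 4 := by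
      rw [Nat.le_div_iff_mul_le (by norm_num), mul_comm]
      convert! hgW (τ u) using 3
      refine filter_congr fun v hv => ?_
      rw [hτ v (hAS v hv), hσ v (hAS v hv), hφA v hv]
    have hsmall : ∑ v with H.Adj (τ u) (τ v) ∧ v ∉ A, G.degree v ≤ D * s := by
      calc ∑ v with H.Adj (τ u) (τ v) ∧ v ∉ A, G.degree v
          ≤ #{v | H.Adj (τ u) (τ v) ∧ v ∉ A} • s := by
            refine sum_le_card_nsmul _ _ _ fun v hv => ?_
            simp only [mem_filter, mem_univ, true_and] at hv
            exact hlow v (by rintro rfl; exact hub hv.1) hv.2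
        _ ≤ D * s := by
            rw [smul_eq_mul]
            refine Nat.mul_le_mul_right _ (le_trans (card_le_card ?_)
              ((card_filter_adj_perm_le H τ (τ u)).trans (hD _)))
            exact monotone_filter_right _ fun _ _ h => h.1
    rw [← sum_filter_add_sum_filter_not _ (· ∈ A), filter_filter, filter_filter, add_comm]
    refine add_le_add hsmall (le_trans (le_of_eq ?_) hmid)
    refine sum_congr ?_ fun _ _ => rfl
    ext v
    simp [and_comm]
  · have h1 : #S ≤ D + (2 * s + 4) + 1 := by
      refine (card_insert_le _ _).trans (Nat.add_le_add_right ((card_union_le _ _).trans ?_) 1)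
      exact add_le_add (hIcard ▸ hD x₀) hAcard
    have h2 : 200 * (s * D) ≤ s * s := by nlinarith
    have h3 : 1000 * s ≤ s * s := Nat.mul_le_mul_right _ hs
    rw [mul_comm D s]
    omega

theorem card_edgeFinset_compl_add {V : Type*} [Fintype V] [DecidableEq V]
    (F : SimpleGraph V) [DecidableRel F.Adj] :
    #Fᶜ.edgeFinset + #F.edgeFinset = (Fintype.card V).choose 2 := by
  rw [← SimpleGraph.card_edgeFinset_top_eq_card_choose_two,
    ← card_union_of_disjoint (SimpleGraph.disjoint_edgeFinset.2 disjoint_compl_left)]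
  congr 1
  ext e
  rw [mem_union, SimpleGraph.mem_edgeFinset, SimpleGraph.mem_edgeFinset,
    SimpleGraph.mem_edgeFinset, ← Set.mem_union, ← SimpleGraph.edgeSet_sup, compl_sup_eq_top]

theorem extremal_graph_contains_large_clique :
    ∃ n₀ : ℕ, ∀ n : ℕ, n₀ ≤ n →
      ∀ (H : SimpleGraph (Fin n)) [DecidableRel H.Adj],
        (∀ v : Fin n, 0 < H.degree v) →
        (H.maxDegree : ℝ) ≤ Real.sqrt n / 200 →
        ∀ F : SimpleGraph (Fin n),
          F.edgeSet.ncard = (n - 1).choose 2 + H.minDegree - 1 →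
          ¬ ContainsCopy F H →
          ∃ K : Finset (Fin n),
            (n : ℝ) - 12 * H.minDegree < K.card ∧
            (∀ u ∈ K, ∀ w ∈ K, u ≠ w → F.Adj u w) := by
  classical
  refine ⟨1000 * 1000, fun n hn H _ hpos hmax F hF hcopy => ?_⟩
  have : NeZero n := ⟨by omega⟩
  by_contra! hno
  obtain ⟨x₀, hx₀⟩ := H.exists_minimal_degree_vertex
  obtain ⟨b, hb⟩ := Fᶜ.exists_maximal_degree_vertex
  have hδ : 0 < H.minDegree := hx₀ ▸ hpos x₀
  have hedges : #Fᶜ.edgeFinset + H.minDegree = n := by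
    have h1 := card_edgeFinset_compl_add F
    rw [Set.ncard_eq_toFinset_card', ← SimpleGraph.edgeFinset] at hF
    obtain ⟨m, rfl⟩ : ∃ m, n = m + 1 := ⟨n - 1, by omega⟩
    rw [Fintype.card_fin, Nat.choose_succ_succ' m 1, Nat.choose_one_right, one_add_one_eq_two] at h1
    simp only [Nat.add_sub_cancel] at hF
    omega
  obtain ⟨K, hKcard, hK⟩ := exists_large_independent_set Fᶜ b
  rw [Fintype.card_fin] at hKcard
  have hKsmall : #K + 12 * H.minDegree ≤ n := by
    by_contra! h
    obtain ⟨u, hu, v, hv, huv, hadj⟩ := hno K (by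
      have : (n : ℝ) < #K + 12 * H.minDegree := by exact_mod_cast h
      linarith)
    exact hK u hu v hv (by simp [huv, hadj])
  have hDs : 200 * H.maxDegree ≤ n.sqrt := by
    rw [Nat.le_sqrt]
    have h1 : 200 * (H.maxDegree : ℝ) ≤ √n := by linarith
    have h2 := mul_self_le_mul_self (by positivity) h1
    rw [Real.mul_self_sqrt (by positivity)] at h2
    exact_mod_cast h2
  obtain ⟨σ, hσ⟩ := exists_packing Fᶜ H n.sqrt H.maxDegree x₀ b (Nat.le_sqrt.2 hn)
    (by simpa using Nat.sqrt_le n) (by simpa [two_mul, add_assoc] using Nat.sqrt_le_add n) hDs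
    H.degree_le_maxDegree (by rw [Fintype.card_fin]; omega)
    (fun v => hb ▸ Fᶜ.degree_le_maxDegree v) (by rw [Fintype.card_fin, ← hx₀]; omega)
  refine hcopy ⟨σ.symm, σ.symm.injective, fun u v huv => ?_⟩
  by_contra h
  exact hσ (σ.symm u) (σ.symm v) (by simp [huv.ne, h]) (by simpa using huv)
end

section
/- There exists n₀ such that for every n ≥ n₀, ex(n, C_n) = C(n−1,2) + 1, where C_n denotes the cycle on n vertices. Equivalently, for n ≥ n₀, every simple graph on n vertices with more than C(n−1,2) + 1 edges contains a Hamilton cycle, and there is a non-Hamiltonian graph on n vertices with C(n−1,2) + 1 edges. -/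
/-- The extremal number `ex(n, H)`: the maximum number of edges in a simple graph on
`n` vertices containing no subgraph isomorphic to `H`. -/
noncomputable def exNum (n : ℕ) {β : Type*} (H : SimpleGraph β) : ℕ :=
  sSup {m | ∃ G : SimpleGraph (Fin n), ¬ ContainsCopy G H ∧ m = G.edgeSet.ncard}

open SimpleGraph

/-- `f 0, …, f (n - 1)` are distinct and none of the `n` cyclically consecutive pairs lies in `S`. -/
structure IsCyclicOrderAvoiding {V : Type*} (n : ℕ) (S : Finset (Sym2 V)) (f : ℕ → V) : Prop where
  injOn : ∀ i < n, ∀ j < n, f i = f j → i = j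
  notMem_succ : ∀ i, i + 1 < n → s(f i, f (i + 1)) ∉ S
  notMem_last : s(f (n - 1), f 0) ∉ S

/-- Shifting a cyclic order by `k + 1` moves the pair `(f k, f (k + 1))` to the closing position. -/
theorem IsCyclicOrderAvoiding.rotate {V : Type*} {n k : ℕ} {S : Finset (Sym2 V)} {f : ℕ → V}
    (hf : IsCyclicOrderAvoiding n S f) (hk : k + 1 < n) :
    IsCyclicOrderAvoiding n S
      (fun j => if j + k + 1 < n then f (j + k + 1) else f (j + k + 1 - n)) := by
  obtain ⟨hinj, hsucc, hlast⟩ := hf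
  refine ⟨fun i hi j hj h => ?_, fun i hi => ?_, ?_⟩
  · split_ifs at h <;> have := hinj _ (by lia) _ (by lia) h <;> lia
  · rcases lt_trichotomy (i + k + 2) n with h | h | h
    · rw [if_pos (by lia), if_pos (by lia), show i + 1 + k + 1 = i + k + 1 + 1 by lia]
      exact hsucc _ (by lia)
    · rw [if_pos (by lia), if_neg (by lia), show i + k + 1 = n - 1 by lia,
        show i + 1 + k + 1 - n = 0 by lia]
      exact hlast
    · rw [if_neg (by lia), if_neg (by lia),
        show i + 1 + k + 1 - n = i + k + 1 - n + 1 by lia]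
      exact hsucc _ (by lia)
  · simpa [show ¬ n - 1 + k + 1 < n by lia, hk, show n - 1 + k + 1 - n = k by lia]
      using hsucc k hk

/-- Reversing the segment after position `i` replaces the pairs `(f i, f (i + 1))` and
`(f (n - 1), f 0)` by the crossing pairs `(f i, f (n - 1))` and `(f (i + 1), f 0)`. -/
theorem IsCyclicOrderAvoiding.insert_of_crossing {V : Type*} [DecidableEq V] {n i : ℕ}
    {S : Finset (Sym2 V)} {f : ℕ → V} (hf : IsCyclicOrderAvoiding n S f) (hi : i + 1 < n)
    (hn : 3 ≤ n)
    (hfirst : s(f (i + 1), f 0) ∉ insert s(f (n - 1), f 0) S)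
    (hlast : s(f i, f (n - 1)) ∉ insert s(f (n - 1), f 0) S) :
    IsCyclicOrderAvoiding n (insert s(f (n - 1), f 0) S)
      (fun j => if j ≤ i then f j else f (n + i - j)) := by
  have hsucc : ∀ j, j + 1 < n → s(f j, f (j + 1)) ∉ insert s(f (n - 1), f 0) S := by
    intro j hj
    have h₁ := hf.injOn j (by lia) (n - 1) (by lia)
    have h₂ := hf.injOn (j + 1) (by lia) 0 (by lia)
    have h₃ := hf.injOn j (by lia) 0 (by lia)
    have h₄ := hf.injOn (j + 1) (by lia) (n - 1) (by lia)
    simp only [Finset.mem_insert, not_or, hf.notMem_succ j hj, not_false_eq_true, and_true,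
      Sym2.eq_iff]
    lia
  refine ⟨fun a ha b hb h => ?_, fun j hj => ?_, ?_⟩
  · split_ifs at h <;> have := hf.injOn _ (by lia) _ (by lia) h <;> lia
  · rcases lt_trichotomy j i with h | rfl | h
    · simpa only [show j ≤ i by lia, show j + 1 ≤ i by lia, if_true] using hsucc j hj
    · simpa only [le_refl, show ¬ j + 1 ≤ j by lia, if_true, if_false,
        show n + j - (j + 1) = n - 1 by lia] using hlast
    · have := hsucc (n + i - (j + 1)) (by lia)
      rw [show n + i - (j + 1) + 1 = n + i - j by lia] at this
      rwa [if_neg (by lia), if_neg (by lia), Sym2.eq_swap (a := f (n + i - j))]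
  · simpa only [show ¬ n - 1 ≤ i by lia, Nat.zero_le, if_true, if_false,
      show n + i - (n - 1) = i + 1 by lia] using hfirst

/-- If fewer than `n - 2` pairs are forbidden, then some position admits a crossing. -/
theorem IsCyclicOrderAvoiding.exists_crossing {V : Type*} {n : ℕ}
    {S T : Finset (Sym2 V)} {f : ℕ → V} (hf : IsCyclicOrderAvoiding n S f)
    (hT : T.card + 3 ≤ n) :
    ∃ i, i + 1 < n ∧ s(f (i + 1), f 0) ∉ T ∧ s(f i, f (n - 1)) ∉ T := by
  classical
  by_contra! hcon
  let g : ℕ → Sym2 V := fun i => if s(f (i + 1), f 0) ∈ T then s(f (i + 1), f 0)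
    else s(f i, f (n - 1))
  have hgT : ∀ i ∈ Finset.range (n - 2), g i ∈ T := by
    intro i hi
    rw [Finset.mem_range] at hi
    have := hcon i (by lia)
    by_cases h : s(f (i + 1), f 0) ∈ T <;> simp_all [g]
  have hinj := hf.injOn
  have hg : Set.InjOn g (Finset.range (n - 2)) := by
    intro i hi j hj hij
    simp only [Finset.coe_range, Set.mem_Iio] at hi hj
    by_cases h₁ : s(f (i + 1), f 0) ∈ T <;> by_cases h₂ : s(f (j + 1), f 0) ∈ T <;>
      simp only [g, h₁, h₂, if_true, if_false, Sym2.eq_iff] at hij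
    all_goals grind
  have := Finset.card_le_card_of_injOn g hgT hg
  rw [Finset.card_range] at this
  lia

/-- Any `n - 3` or fewer pairs can be avoided by some cyclic order of `n ≥ 3` points. -/
theorem exists_isCyclicOrderAvoiding {n : ℕ} (S : Finset (Sym2 (Fin n)))
    (hS : S.card + 3 ≤ n) : ∃ f, IsCyclicOrderAvoiding n S f := by
  induction S using Finset.induction_on with
  | empty =>
    refine ⟨fun i => ⟨i % n, Nat.mod_lt _ (by lia)⟩, fun i hi j hj h => ?_, by simp, by simp⟩
    simpa [Nat.mod_eq_of_lt hi, Nat.mod_eq_of_lt hj] using h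
  | insert e S he ih =>
    obtain ⟨f, hf⟩ := ih (by rw [Finset.card_insert_of_notMem he] at hS; lia)
    have close : ∀ g : ℕ → Fin n, IsCyclicOrderAvoiding n S g → s(g (n - 1), g 0) = e →
        ∃ f, IsCyclicOrderAvoiding n (insert e S) f := by
      rintro g hg rfl
      obtain ⟨i, hi, h₁, h₂⟩ := hg.exists_crossing hS
      exact ⟨_, hg.insert_of_crossing hi (by lia) h₁ h₂⟩
    by_cases hlast : s(f (n - 1), f 0) = e
    · exact close f hf hlast
    by_cases hsucc : ∃ k, k + 1 < n ∧ s(f k, f (k + 1)) = e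
    · obtain ⟨k, hk, hke⟩ := hsucc
      refine close _ (hf.rotate hk) ?_
      simpa [show ¬ n - 1 + k + 1 < n by lia, hk, show n - 1 + k + 1 - n = k by lia] using hke
    · push Not at hsucc
      exact ⟨f, hf.injOn, fun i hi => by simp [hsucc i hi, hf.notMem_succ i hi],
        by simp [hlast, hf.notMem_last]⟩

theorem IsCyclicOrderAvoiding.containsCopy {n : ℕ} {S : Finset (Sym2 (Fin n))} {f : ℕ → Fin n}
    {G : SimpleGraph (Fin n)} (hf : IsCyclicOrderAvoiding n S f) (hn : 3 ≤ n)
    (hS : ∀ u v, u ≠ v → s(u, v) ∉ S → G.Adj u v) : ContainsCopy G (cycleGraph n) := by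
  have hadj : ∀ u v : Fin n, (u - v).val = 1 → G.Adj (f u) (f v) := by
    intro u v huv
    refine hS _ _ (fun h => ?_) ?_
    · have := hf.injOn _ u.2 _ v.2 h
      rw [Fin.sub_def] at huv
      simp [this, show n - v.1 + v.1 = n by lia] at huv
    · rcases le_or_gt v u with h | h
      · rw [Fin.sub_val_of_le h] at huv
        rw [Sym2.eq_swap, show u.val = v.val + 1 by lia]
        exact hf.notMem_succ _ (by lia)
      · rw [Fin.coe_sub_iff_lt.mpr h] at huv
        rw [Sym2.eq_swap, show v.val = n - 1 by lia, show u.val = 0 by lia]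
        exact hf.notMem_last
  refine ⟨fun i => f i, fun i j h => Fin.ext (hf.injOn _ i.2 _ j.2 h), fun u v huv => ?_⟩
  rcases cycleGraph_adj'.mp huv with h | h
  · exact hadj u v h
  · exact (hadj v u h).symm

theorem containsCopy_cycleGraph_iff_isHamiltonian {n : ℕ} (hn : 3 ≤ n)
    (G : SimpleGraph (Fin n)) : ContainsCopy G (cycleGraph n) ↔ G.IsHamiltonian := by
  have hcopy : ContainsCopy G (cycleGraph n) ↔ cycleGraph n ⊑ G :=
    ⟨fun ⟨f, hf, h⟩ => ⟨⟨⟨f, fun {a b} => h a b⟩, hf⟩⟩,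
      fun ⟨f⟩ => ⟨f, f.injective, fun _ _ h => f.toHom.map_adj h⟩⟩
  rw [hcopy, cycleGraph_isContained_iff (by lia), SimpleGraph.IsHamiltonian]
  simp [Walk.isHamiltonianCycle_iff_isCycle_and_length_eq, show n ≠ 1 by lia]

theorem ncard_edgeSet_add_ncard_edgeSet_compl {n : ℕ} (G : SimpleGraph (Fin n)) :
    G.edgeSet.ncard + Gᶜ.edgeSet.ncard = n.choose 2 := by
  classical
  rw [← Set.ncard_union_eq (disjoint_edgeSet.mpr disjoint_compl_right), ← edgeSet_sup,
    sup_compl_eq_top, ← coe_edgeFinset, Set.ncard_coe_finset, card_edgeFinset_top_eq_card_choose_two,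
    Fintype.card_fin]

theorem choose_two_eq_choose_two_pred_add {n : ℕ} (hn : 1 ≤ n) :
    n.choose 2 = (n - 1).choose 2 + (n - 1) := by
  obtain ⟨m, rfl⟩ := Nat.exists_eq_add_of_le' hn
  simp [Nat.choose_succ_succ', add_comm]

theorem containsCopy_cycleGraph_of_lt_ncard_edgeSet {n : ℕ} (hn : 3 ≤ n)
    (G : SimpleGraph (Fin n)) (hG : (n - 1).choose 2 + 1 < G.edgeSet.ncard) :
    ContainsCopy G (cycleGraph n) := by
  classical
  have hcompl := ncard_edgeSet_add_ncard_edgeSet_compl G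
  rw [choose_two_eq_choose_two_pred_add (by lia), ← coe_edgeFinset Gᶜ,
    Set.ncard_coe_finset] at hcompl
  obtain ⟨f, hf⟩ := exists_isCyclicOrderAvoiding Gᶜ.edgeFinset (by lia)
  refine hf.containsCopy hn fun u v huv h => ?_
  simpa [huv] using h

/-- A Hamiltonian graph has no vertex with a unique neighbour. -/
theorem not_containsCopy_cycleGraph_of_pendant {n : ℕ} (hn : 3 ≤ n) {G : SimpleGraph (Fin n)}
    {a b : Fin n} (h : ∀ v, G.Adj a v → v = b) : ¬ ContainsCopy G (cycleGraph n) := by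
  rintro ⟨f, hf, hadj⟩
  obtain ⟨i, rfl⟩ := Finite.surjective_of_injective hf a
  obtain ⟨m, rfl⟩ := Nat.exists_eq_add_of_le' hn
  have hdeg := cycleGraph_degree_three_le (v := i)
  have hle : ((cycleGraph (m + 3)).neighborFinset i).card ≤ 1 :=
    Finset.card_le_one.mpr fun x hx y hy => hf <|
      (h _ (hadj _ _ (by simpa using hx))).trans (h _ (hadj _ _ (by simpa using hy))).symm
  rw [card_neighborFinset_eq_degree] at hle
  lia

/-- The complete graph on `n - 1` vertices with a pendant edge attached. -/
theorem exists_ncard_edgeSet_eq_and_not_containsCopy {n : ℕ} (hn : 3 ≤ n) :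
    ∃ G : SimpleGraph (Fin n), G.edgeSet.ncard = (n - 1).choose 2 + 1 ∧
      ¬ ContainsCopy G (cycleGraph n) := by
  classical
  obtain ⟨m, rfl⟩ := Nat.exists_eq_add_of_le' hn
  let T : Finset (Fin (m + 3)) := {0, 1}ᶜ
  let B : Finset (Sym2 (Fin (m + 3))) := T.image fun j => s(0, j)
  have hT : T.card = m + 1 := by
    rw [Finset.card_compl, Finset.card_pair (by simp), Fintype.card_fin]
    lia
  have hB : B.card = m + 1 := by
    rw [← hT]
    exact Finset.card_image_of_injective _ fun x y h => Sym2.congr_right.mp h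
  have hedge : (fromEdgeSet (B : Set (Sym2 (Fin (m + 3))))).edgeSet = B := by
    rw [edgeSet_fromEdgeSet, sdiff_eq_left, Set.disjoint_left]
    intro e he
    obtain ⟨j, hj, rfl⟩ := Finset.mem_image.mp he
    simp only [T, Finset.mem_compl, Finset.mem_insert, not_or] at hj
    simpa using Ne.symm hj.1
  refine ⟨(fromEdgeSet (B : Set (Sym2 (Fin (m + 3)))))ᶜ, ?_,
    not_containsCopy_cycleGraph_of_pendant hn (a := 0) (b := 1) fun v hv => ?_⟩
  · have := ncard_edgeSet_add_ncard_edgeSet_compl (fromEdgeSet (B : Set (Sym2 (Fin (m + 3)))))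
    rw [hedge, Set.ncard_coe_finset, hB, choose_two_eq_choose_two_pred_add (by lia)] at this
    lia
  · by_contra hne
    rw [compl_adj, fromEdgeSet_adj] at hv
    refine hv.2 ⟨Finset.mem_coe.mpr (Finset.mem_image.mpr ⟨v, ?_, rfl⟩), hv.1⟩
    simp [T, hne, hv.1.symm]

theorem ore_theorem :
    ∃ n₀ : ℕ, ∀ n : ℕ, n₀ ≤ n →
      exNum n (SimpleGraph.cycleGraph n) = (n - 1).choose 2 + 1 ∧
      (∀ G : SimpleGraph (Fin n),
        (n - 1).choose 2 + 1 < G.edgeSet.ncard → G.IsHamiltonian) ∧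
      (∃ G : SimpleGraph (Fin n),
        G.edgeSet.ncard = (n - 1).choose 2 + 1 ∧ ¬ G.IsHamiltonian) := by
  refine ⟨3, fun n hn => ?_⟩
  obtain ⟨G, hG, hfree⟩ := exists_ncard_edgeSet_eq_and_not_containsCopy hn
  have hmax : IsGreatest {m | ∃ G : SimpleGraph (Fin n),
      ¬ ContainsCopy G (cycleGraph n) ∧ m = G.edgeSet.ncard} ((n - 1).choose 2 + 1) := by
    refine ⟨⟨G, hfree, hG.symm⟩, ?_⟩
    rintro _ ⟨H, hH, rfl⟩
    by_contra! hlt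
    exact hH (containsCopy_cycleGraph_of_lt_ncard_edgeSet hn H hlt)
  exact ⟨hmax.csSup_eq,
    fun H hH => (containsCopy_cycleGraph_iff_isHamiltonian hn H).mp
      (containsCopy_cycleGraph_of_lt_ncard_edgeSet hn H hH),
    G, hG, fun h => hfree ((containsCopy_cycleGraph_iff_isHamiltonian hn G).mpr h)⟩
end
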